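/- arXiv:1709.04379 — 2 statements merged into one kernel-verified Lean document; each statement's English description precedes it below -/
import Mathlib

section
/- Let θ = (1+√5)/2, θ̄ = (1−√5)/2, α = 1 + i·θ̄, and σ(α) = 1 + i·θ. The minimum, over all pairs (x₀, x₁) ∈ (ℤ[i][θ])² with (x₀, x₁) ≠ (0, 0), of the squared modulus of det( (1/√5)·[[α x₀, α x₁], [i·σ(α)σ(x₁), σ(α)σ(x₀)]] ) = (1/5)·α σ(α)·(x₀σ(x₀) − i·x₁σ(x₁)) equals 1/5. That is, the minimum determinant of the Golden code is δ(C) = 1/5. -/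
noncomputable section

open Complex GaussianInt

/-- `θ = (1+√5)/2` as a complex number. -/
def thC : ℂ := (1 + Real.sqrt 5) / 2

/-- `θ̄ = (1−√5)/2` as a complex number. -/
def thbC : ℂ := (1 - Real.sqrt 5) / 2

/-- `α = 1 + i·θ̄`. -/
def alC : ℂ := 1 + Complex.I * thbC

/-- `σ(α) = 1 + i·θ`. -/
def salC : ℂ := 1 + Complex.I * thC

/-!
The determinant of a codeword is `(2 + i) / 5` times the Gaussian integer `N(x₀) - i N(x₁)`, where
`N` is the norm of `ℚ(i, √5) / ℚ(i)` and `α σ(α) = 2 + i`. Hence its squared modulus is one fifth of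
a nonnegative integer, and everything reduces to `N(x₀) ≠ i N(x₁)` unless `x₀ = x₁ = 0`.
Completing the square, an equality would give `x² - i y² = 5 (z² - i w²)` in `ℤ[i]`. Since `i` is
not a square modulo the prime `2 + i`, that prime occurs in `x² - i y²` and in `z² - i w²` with even
multiplicity, while it divides `5 = (2 + i) (2 - i)` exactly once.
-/

lemma eq_top_and_eq_top_of_two_mul_eq_odd_add_two_mul {m n : ℕ∞} {k : ℕ}
    (h : 2 * m = (2 * k + 1 : ℕ) + 2 * n) : m = ⊤ ∧ n = ⊤ := by
  have htop : m = ⊤ ↔ n = ⊤ := by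
    simpa [two_mul] using congrArg (· = ⊤) h
  suffices m = ⊤ from ⟨this, htop.1 this⟩
  by_contra hm
  lift m to ℕ using hm
  lift n to ℕ using fun hn ↦ ENat.natCast_ne_top m (htop.2 hn)
  norm_cast at h
  lia

section NonresidueNormForm

variable {R : Type*} [CommRing R] [IsDomain R] {p c : R}

lemma dvd_and_dvd_of_dvd_sq_sub_mul_sq [IsBezout R] (hp : Prime p)
    (hc : ∀ t, ¬ p ∣ t ^ 2 - c) {x y : R} (h : p ∣ x ^ 2 - c * y ^ 2) : p ∣ x ∧ p ∣ y := by
  have hy : p ∣ y := by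
    by_contra hy
    obtain ⟨u, v, huv⟩ := hp.coprime_iff_not_dvd.2 hy
    -- `v` inverts `y` modulo `p`, so `x * v` is a square root of `c` there.
    have hvy : p ∣ (v * y) ^ 2 - 1 := ⟨-u * (v * y + 1), by linear_combination (v * y + 1) * huv⟩
    refine hc (x * v) ?_
    have hsum := (h.mul_left (v ^ 2)).add (hvy.mul_left c)
    rwa [show v ^ 2 * (x ^ 2 - c * y ^ 2) + c * ((v * y) ^ 2 - 1) = (x * v) ^ 2 - c by ring] at hsum
  have hx : p ∣ x ^ 2 := (dvd_sub_left ((dvd_pow hy two_ne_zero).mul_left c)).1 h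
  exact ⟨hp.dvd_of_dvd_pow hx, hy⟩

lemma emultiplicity_sq_sub_mul_sq [IsBezout R] [GCDMonoid R] (hp : Prime p)
    (hc : ∀ t, ¬ p ∣ t ^ 2 - c) (x y : R) :
    emultiplicity p (x ^ 2 - c * y ^ 2) = 2 * emultiplicity p (gcd x y) := by
  obtain ⟨x', y', hx, hy, hcoprime⟩ := extract_gcd x y
  have hprimitive : ¬ p ∣ x' ^ 2 - c * y' ^ 2 := fun h ↦
    have ⟨hx', hy'⟩ := dvd_and_dvd_of_dvd_sq_sub_mul_sq hp hc h
    hp.not_isUnit (isUnit_of_dvd_unit (dvd_gcd hx' hy') hcoprime)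
  calc emultiplicity p (x ^ 2 - c * y ^ 2)
      = emultiplicity p (gcd x y ^ 2 * (x' ^ 2 - c * y' ^ 2)) := by
        congr 1
        linear_combination (x + gcd x y * x') * hx - c * (y + gcd x y * y') * hy
    _ = 2 * emultiplicity p (gcd x y) := by
        rw [emultiplicity_mul hp, emultiplicity_pow hp, emultiplicity_eq_zero.2 hprimitive,
          add_zero, Nat.cast_two]

theorem eq_zero_of_sq_sub_mul_sq_eq_mul [IsPrincipalIdealRing R] {m : R} {k : ℕ} (hp : Prime p)
    (hc : ∀ t, ¬ p ∣ t ^ 2 - c) (hm : emultiplicity p m = (2 * k + 1 : ℕ)) {x y z w : R}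
    (h : x ^ 2 - c * y ^ 2 = m * (z ^ 2 - c * w ^ 2)) : x = 0 ∧ y = 0 ∧ z = 0 ∧ w = 0 := by
  classical
  let : GCDMonoid R := IsBezout.toGCDDomain R
  have hparity : 2 * emultiplicity p (gcd x y) =
      (2 * k + 1 : ℕ) + 2 * emultiplicity p (gcd z w) := by
    rw [← emultiplicity_sq_sub_mul_sq hp hc, h, emultiplicity_mul hp, hm,
      emultiplicity_sq_sub_mul_sq hp hc]
  have eq_zero_of_top {a : R} (ha : emultiplicity p a = ⊤) : a = 0 := by
    by_contra ha0
    exact emultiplicity_eq_top.1 ha (.of_prime_left hp ha0)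
  obtain ⟨hxy, hzw⟩ := eq_top_and_eq_top_of_two_mul_eq_odd_add_two_mul hparity
  obtain ⟨hx, hy⟩ := (gcd_eq_zero_iff x y).1 (eq_zero_of_top hxy)
  obtain ⟨hz, hw⟩ := (gcd_eq_zero_iff z w).1 (eq_zero_of_top hzw)
  exact ⟨hx, hy, hz, hw⟩

end NonresidueNormForm

section GoldenNorm

/-- The norm `(a + bθ)(a + bθ̄)` from `R[θ]` to `R`, where `θ² = θ + 1`, written as a form in the
coordinates `a, b` so that it takes values in `R` itself. -/
def goldenNorm {R : Type*} [CommRing R] (a b : R) : R :=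
  a ^ 2 + a * b - b ^ 2

lemma map_goldenNorm {R S : Type*} [CommRing R] [CommRing S] (f : R →+* S) {θ θ' : S}
    (hsum : θ + θ' = 1) (hprod : θ * θ' = -1) (a b : R) :
    f (goldenNorm a b) = (f a + f b * θ) * (f a + f b * θ') := by
  simp only [goldenNorm, map_sub, map_add, map_mul, map_pow]
  linear_combination -(f a * f b) * hsum - f b ^ 2 * hprod

lemma four_mul_goldenNorm {R : Type*} [CommRing R] (a b : R) :
    4 * goldenNorm a b = (2 * a + b) ^ 2 - 5 * b ^ 2 := by
  unfold goldenNorm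
  ring

theorem eq_zero_of_goldenNorm_eq_mul_goldenNorm {R : Type*} [CommRing R] [IsDomain R]
    [IsPrincipalIdealRing R] {p e : R} {k : ℕ} (h2 : (2 : R) ≠ 0) (hp : Prime p)
    (he : ∀ t, ¬ p ∣ t ^ 2 - e) (h5 : emultiplicity p (5 : R) = (2 * k + 1 : ℕ)) {a b c d : R}
    (h : goldenNorm a b = e * goldenNorm c d) : a = 0 ∧ b = 0 ∧ c = 0 ∧ d = 0 := by
  have hsq : (2 * a + b) ^ 2 - e * (2 * c + d) ^ 2 = 5 * (b ^ 2 - e * d ^ 2) := by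
    linear_combination 4 * h - four_mul_goldenNorm a b + e * four_mul_goldenNorm c d
  obtain ⟨ha, hc, rfl, rfl⟩ := eq_zero_of_sq_sub_mul_sq_eq_mul hp he h5 hsq
  rw [add_zero] at ha hc
  exact ⟨(mul_eq_zero_iff_left h2).1 ha, rfl, (mul_eq_zero_iff_left h2).1 hc, rfl⟩

end GoldenNorm

section GaussianPrime

open Zsqrtd

lemma irreducible_of_irreducible_norm {d : ℤ} {z : ℤ√d} (hz : Irreducible z.norm) :
    Irreducible z :=
  have : IsLocalHom (normMonoidHom (d := d)) := ⟨fun w ↦ (isUnit_iff_norm_isUnit w).2⟩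
  Irreducible.of_map (f := normMonoidHom) hz

lemma prime_two_add_sqrtd : Prime (2 + sqrtd : GaussianInt) := by
  have hnorm : (2 + sqrtd : GaussianInt).norm = 5 := by decide
  refine (irreducible_of_irreducible_norm ?_).prime
  rw [hnorm]
  exact (show Prime (5 : ℤ) by norm_num).irreducible

/-- Reduction of `ℤ[i]` modulo `2 + i`, which sends `i` to `-2 = 3`. -/
def gaussianToZModFive : GaussianInt →+* ZMod 5 :=
  Zsqrtd.lift ⟨3, by decide⟩

lemma gaussianToZModFive_sqrtd : gaussianToZModFive sqrtd = 3 := by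
  simp [gaussianToZModFive]

lemma gaussianToZModFive_eq_zero_of_dvd {z : GaussianInt} (h : 2 + sqrtd ∣ z) :
    gaussianToZModFive z = 0 := by
  have hzero : gaussianToZModFive (2 + sqrtd) = 0 := by
    rw [map_add, gaussianToZModFive_sqrtd, map_ofNat]
    decide
  exact zero_dvd_iff.1 (hzero ▸ map_dvd gaussianToZModFive h)

lemma not_two_add_sqrtd_dvd_sq_sub_sqrtd (t : GaussianInt) :
    ¬ (2 + sqrtd : GaussianInt) ∣ t ^ 2 - sqrtd := by
  have three_not_square : ∀ s : ZMod 5, s ^ 2 - 3 ≠ 0 := by decide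
  intro h
  have hzero := gaussianToZModFive_eq_zero_of_dvd h
  rw [map_sub, map_pow, gaussianToZModFive_sqrtd] at hzero
  exact three_not_square _ hzero

lemma not_two_add_sqrtd_dvd_two_sub_sqrtd :
    ¬ (2 + sqrtd : GaussianInt) ∣ 2 - sqrtd := by
  intro h
  have hzero := gaussianToZModFive_eq_zero_of_dvd h
  rw [map_sub, gaussianToZModFive_sqrtd, map_ofNat] at hzero
  exact absurd hzero (by decide)

lemma emultiplicity_two_add_sqrtd_five :
    emultiplicity (2 + sqrtd : GaussianInt) 5 = 1 := by
  have hfactor : (5 : GaussianInt) = (2 + sqrtd) * (2 - sqrtd) := by decide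
  have hself : emultiplicity (2 + sqrtd : GaussianInt) (2 + sqrtd) = 1 := by
    simpa using emultiplicity_pow_self_of_prime prime_two_add_sqrtd 1
  rw [hfactor, emultiplicity_mul prime_two_add_sqrtd, hself,
    emultiplicity_eq_zero.2 not_two_add_sqrtd_dvd_two_sub_sqrtd, add_zero]

theorem eq_zero_of_goldenNorm_eq_sqrtd_mul_goldenNorm {a b c d : GaussianInt}
    (h : goldenNorm a b = sqrtd * goldenNorm c d) : a = 0 ∧ b = 0 ∧ c = 0 ∧ d = 0 :=
  eq_zero_of_goldenNorm_eq_mul_goldenNorm (k := 0) two_ne_zero prime_two_add_sqrtd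
    not_two_add_sqrtd_dvd_sq_sub_sqrtd emultiplicity_two_add_sqrtd_five h

end GaussianPrime

section GoldenCode

lemma thC_eq_goldenRatio : thC = Real.goldenRatio := by
  simp [thC, Real.goldenRatio]

lemma thbC_eq_goldenConj : thbC = Real.goldenConj := by
  simp [thbC, Real.goldenConj]

lemma thC_add_thbC : thC + thbC = 1 := by
  rw [thC_eq_goldenRatio, thbC_eq_goldenConj]
  exact_mod_cast Real.goldenRatio_add_goldenConj

lemma thC_mul_thbC : thC * thbC = -1 := by
  rw [thC_eq_goldenRatio, thbC_eq_goldenConj]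
  exact_mod_cast Real.goldenRatio_mul_goldenConj

lemma alC_mul_salC : alC * salC = 2 + I := by
  unfold alC salC
  linear_combination I * thC_add_thbC + I ^ 2 * thC_mul_thbC - I_sq

lemma toComplex_sqrtd : toComplex Zsqrtd.sqrtd = I := by
  simp [toComplex_def]

/-- The Golden code codeword of `x₀ = a + bθ` and `x₁ = c + dθ`, given by the coordinates of
`x₀` and `x₁` over `ℤ[i]`. -/
def goldenCodeword (a b c d : GaussianInt) : Matrix (Fin 2) (Fin 2) ℂ :=
  (Real.sqrt 5 : ℂ)⁻¹ •
    !![alC * (toComplex a + toComplex b * thC), alC * (toComplex c + toComplex d * thC);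
       I * (salC * (toComplex c + toComplex d * thbC)), salC * (toComplex a + toComplex b * thbC)]

lemma det_goldenCodeword (a b c d : GaussianInt) :
    (goldenCodeword a b c d).det =
      (2 + I) / 5 * toComplex (goldenNorm a b - Zsqrtd.sqrtd * goldenNorm c d) := by
  have hsqrt : (Real.sqrt 5 : ℂ) ^ 2 = 5 := by
    exact_mod_cast Real.sq_sqrt (show (0 : ℝ) ≤ 5 by norm_num)
  rw [goldenCodeword, Matrix.det_smul, Matrix.det_fin_two_of, Fintype.card_fin, inv_pow, hsqrt,
    map_sub, map_mul, toComplex_sqrtd, map_goldenNorm _ thC_add_thbC thC_mul_thbC,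
    map_goldenNorm _ thC_add_thbC thC_mul_thbC, ← alC_mul_salC]
  ring

lemma normSq_det_goldenCodeword (a b c d : GaussianInt) :
    normSq (goldenCodeword a b c d).det =
      (goldenNorm a b - Zsqrtd.sqrtd * goldenNorm c d).norm / 5 := by
  have hscale : normSq ((2 + I) / 5) = 1 / 5 := by
    norm_num [normSq_apply]
  rw [det_goldenCodeword, normSq_mul, hscale, ← intCast_real_norm]
  ring

end GoldenCode

/-- The minimum, over all `(x₀, x₁) ∈ (ℤ[i][θ])² \ {(0,0)}` (with `x₀ = a + bθ`,
`x₁ = c + dθ`, `a, b, c, d` Gaussian integers), of the squared modulus of the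
determinant of the Golden-code codeword
`(1/√5)·[[α x₀, α x₁], [i·σ(α x₁), σ(α x₀)]]` equals `1/5`:
the minimum determinant of the Golden code is `δ(C) = 1/5`. -/
theorem stmt5 :
    IsLeast { r : ℝ | ∃ a b c d : GaussianInt, ¬(a = 0 ∧ b = 0 ∧ c = 0 ∧ d = 0) ∧
      r = Complex.normSq (Matrix.det
        (((Real.sqrt 5 : ℂ))⁻¹ •
          !![alC * (toComplex a + toComplex b * thC),
             alC * (toComplex c + toComplex d * thC);
             Complex.I * (salC * (toComplex c + toComplex d * thbC)),
             salC * (toComplex a + toComplex b * thbC)])) }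
      (1 / 5 : ℝ) := by
  constructor
  · refine ⟨1, 0, 0, 0, by simp, ?_⟩
    have hnorm : (goldenNorm 1 0 - Zsqrtd.sqrtd * goldenNorm 0 0 : GaussianInt).norm = 1 := by
      decide
    calc (1 / 5 : ℝ)
        = (goldenNorm 1 0 - Zsqrtd.sqrtd * goldenNorm 0 0 : GaussianInt).norm / 5 := by simp [hnorm]
      _ = normSq (goldenCodeword 1 0 0 0).det := (normSq_det_goldenCodeword 1 0 0 0).symm
  · rintro _ ⟨a, b, c, d, hne, rfl⟩
    have hpos : 0 < (goldenNorm a b - Zsqrtd.sqrtd * goldenNorm c d).norm :=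
      norm_pos.2 fun h ↦ hne (eq_zero_of_goldenNorm_eq_sqrtd_mul_goldenNorm (sub_eq_zero.1 h))
    calc (1 / 5 : ℝ)
        ≤ (goldenNorm a b - Zsqrtd.sqrtd * goldenNorm c d).norm / 5 := by
          gcongr
          exact_mod_cast hpos
      _ = normSq (goldenCodeword a b c d).det := (normSq_det_goldenCodeword a b c d).symm
end
end

section
/- Let θ = (1+√5)/2, θ̄ = (1−√5)/2, O_L = ℤ[i][θ], and let σ be the map σ(a + bθ) = a + bθ̄ (a, b ∈ ℤ[i]). For every nonzero β ∈ O_L, the minimum of |x₀σ(x₀) − i·x₁σ(x₁)|² over all pairs (x₀, x₁) ∈ (β·O_L)² with (x₀, x₁) ≠ (0, 0) equals |β·σ(β)|², which equals the absolute norm of the ideal β·O_L. -/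
noncomputable section

open Complex GaussianInt

/-- The ring of integers `O_L = ℤ[i][θ]` of `L = ℚ(i,√5)`, realized as the subring of
`ℂ` generated by `i` and `θ`. -/
def OL : Subring ℂ := Subring.closure {Complex.I, thC}

/-!
Write `N` for the relative norm `x ↦ x σ(x)` of `O_L` over `ℤ[i]`. It is multiplicative, so on
`(β O_L)²` the form `N x₀ - i N x₁` takes the values `N β * (N y₀ - i N y₁)` with `y₀, y₁ ∈ O_L`.
The value `N β` is attained at `(β, 0)`, and since a nonzero Gaussian integer has absolute value
at least `1`, minimality amounts to the form being anisotropic.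

Anisotropy is a descent at the prime `π = 2 + i`, which ramifies in `O_L`. As
`4 N(a + bθ) = (2a + b)² - 5b²` and `5 = π(2 - i)`, a zero of the form solves
`x² - i y² = π(2 - i)(z² - i w²)`. Because `i` is not a square modulo `π`, all four unknowns are
divisible by `π`, hence by every power of `π`.

The index of `β O_L` is the absolute value of the determinant of multiplication by `β` over `ℤ`,
and by transitivity of norms in `ℤ ⊆ ℤ[i] ⊆ O_L` this is the Gaussian norm of `N β`.
-/

section Descent

variable {R k : Type*} [CommRing R] [Field k]

lemma eq_zero_and_eq_zero_of_sq_eq_mul_sq {u x y : k} (hu : ¬IsSquare u)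
    (h : x ^ 2 = u * y ^ 2) : x = 0 ∧ y = 0 := by
  have hy : y = 0 := by
    by_contra hy
    exact hu ⟨x / y, by field_simp; exact h.symm⟩
  exact ⟨by simpa [hy] using h, hy⟩

variable {φ : R →+* k} {π u ε x y z w : R}

lemma dvd_and_dvd_of_dvd_sq_sub_mul_sq_s6 (hφ : ∀ r, φ r = 0 ↔ π ∣ r) (hu : ¬IsSquare (φ u))
    (h : π ∣ x ^ 2 - u * y ^ 2) : π ∣ x ∧ π ∣ y := by
  simp only [← hφ, map_sub, map_mul, map_pow, sub_eq_zero] at h ⊢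
  exact eq_zero_and_eq_zero_of_sq_eq_mul_sq hu h

variable [IsDomain R]

lemma exists_eq_mul_of_sq_sub_mul_sq_eq (hφ : ∀ r, φ r = 0 ↔ π ∣ r) (hπ : π ≠ 0)
    (hu : ¬IsSquare (φ u)) (hε : φ ε ≠ 0)
    (h : x ^ 2 - u * y ^ 2 = π * ε * (z ^ 2 - u * w ^ 2)) :
    ∃ x' y' z' w', x = π * x' ∧ y = π * y' ∧ z = π * z' ∧ w = π * w' ∧
      x' ^ 2 - u * y' ^ 2 = π * ε * (z' ^ 2 - u * w' ^ 2) := by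
  obtain ⟨⟨x', rfl⟩, ⟨y', rfl⟩⟩ := dvd_and_dvd_of_dvd_sq_sub_mul_sq_s6 hφ hu
    (h ▸ Dvd.intro _ (mul_assoc π ε _).symm)
  have hzw : π * (x' ^ 2 - u * y' ^ 2) = ε * (z ^ 2 - u * w ^ 2) :=
    mul_left_cancel₀ hπ (by linear_combination h)
  have hdvd : π ∣ z ^ 2 - u * w ^ 2 := by
    have hmap : φ ε * φ (z ^ 2 - u * w ^ 2) = 0 := by
      rw [← map_mul, ← hzw, hφ]
      exact dvd_mul_right π _
    exact (hφ _).1 ((mul_eq_zero.1 hmap).resolve_left hε)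
  obtain ⟨⟨z', rfl⟩, ⟨w', rfl⟩⟩ := dvd_and_dvd_of_dvd_sq_sub_mul_sq_s6 hφ hu hdvd
  exact ⟨x', y', z', w', rfl, rfl, rfl, rfl, mul_left_cancel₀ hπ (by linear_combination hzw)⟩

lemma pow_dvd_of_sq_sub_mul_sq_eq (hφ : ∀ r, φ r = 0 ↔ π ∣ r) (hπ : π ≠ 0)
    (hu : ¬IsSquare (φ u)) (hε : φ ε ≠ 0)
    (h : x ^ 2 - u * y ^ 2 = π * ε * (z ^ 2 - u * w ^ 2)) (n : ℕ) :
    π ^ n ∣ x ∧ π ^ n ∣ y ∧ π ^ n ∣ z ∧ π ^ n ∣ w := by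
  induction n generalizing x y z w with
  | zero => simp
  | succ n ih =>
    obtain ⟨x', y', z', w', rfl, rfl, rfl, rfl, h'⟩ :=
      exists_eq_mul_of_sq_sub_mul_sq_eq hφ hπ hu hε h
    simpa only [pow_succ', mul_dvd_mul_iff_left hπ] using ih h'

lemma eq_zero_of_sq_sub_mul_sq_eq [WfDvdMonoid R] (hφ : ∀ r, φ r = 0 ↔ π ∣ r) (hπ : π ≠ 0)
    (hu : ¬IsSquare (φ u)) (hε : φ ε ≠ 0)
    (h : x ^ 2 - u * y ^ 2 = π * ε * (z ^ 2 - u * w ^ 2)) :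
    x = 0 ∧ y = 0 ∧ z = 0 ∧ w = 0 := by
  have hunit : ¬IsUnit π := fun hunit => (hunit.map φ).ne_zero ((hφ π).2 dvd_rfl)
  have eq_zero {r : R} (hr : ∀ n, π ^ n ∣ r) : r = 0 := by
    by_contra hr0
    obtain ⟨n, hn⟩ := FiniteMultiplicity.of_not_isUnit hunit hr0
    exact hn (hr _)
  have hdvd := pow_dvd_of_sq_sub_mul_sq_eq hφ hπ hu hε h
  exact ⟨eq_zero fun n => (hdvd n).1, eq_zero fun n => (hdvd n).2.1,
    eq_zero fun n => (hdvd n).2.2.1, eq_zero fun n => (hdvd n).2.2.2⟩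

end Descent

section QuotientCard

lemma card_quotient_span_singleton_eq_natAbs_norm {S : Type*} [CommRing S] [Module.Free ℤ S]
    [Module.Finite ℤ S] {x : S} (hx : x ∈ nonZeroDivisors S) :
    Nat.card (S ⧸ Ideal.span {x}) = (Algebra.norm ℤ x).natAbs := by
  let I : Submodule ℤ S := (Ideal.span {x}).restrictScalars ℤ
  have mem (y : S) : LinearMap.mulLeft ℤ x y ∈ I :=
    Ideal.mem_span_singleton.2 (dvd_mul_right x y)
  let e : S ≃ₗ[ℤ] I := LinearEquiv.ofBijective ((LinearMap.mulLeft ℤ x).codRestrict I mem)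
    ⟨fun y z h => (mul_cancel_left_mem_nonZeroDivisors hx).1 (congrArg Subtype.val h),
      fun ⟨y, hy⟩ => (Ideal.mem_span_singleton.1 hy).imp fun z hz => Subtype.ext hz.symm⟩
  exact (Submodule.natAbs_det_equiv I e).symm

/-- Coordinates of `ℤ√d` with respect to `1, √d`. -/
@[simps]
def zsqrtdLinearEquivTuple (d : ℤ) : Zsqrtd d ≃ₗ[ℤ] (Fin 2 → ℤ) where
  toFun z := ![z.re, z.im]
  invFun v := ⟨v 0, v 1⟩
  map_add' z w := by simp
  map_smul' n z := by simp
  left_inv z := rfl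
  right_inv v := by ext i; fin_cases i <;> rfl

/-- The basis `1, √d` of `ℤ√d` over `ℤ`. -/
def zsqrtdBasis (d : ℤ) : Module.Basis (Fin 2) ℤ (Zsqrtd d) :=
  .ofEquivFun (zsqrtdLinearEquivTuple d)

lemma leftMulMatrix_zsqrtdBasis {d : ℤ} (z : Zsqrtd d) :
    Algebra.leftMulMatrix (zsqrtdBasis d) z = !![z.re, d * z.im; z.im, z.re] := by
  ext i j
  fin_cases i <;> fin_cases j <;> simp [Algebra.leftMulMatrix_eq_repr_mul, zsqrtdBasis]

lemma algebraNorm_zsqrtd {d : ℤ} (z : Zsqrtd d) : Algebra.norm ℤ z = z.norm := by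
  rw [Algebra.norm_eq_matrix_det (zsqrtdBasis d), leftMulMatrix_zsqrtdBasis,
    Matrix.det_fin_two_of, Zsqrtd.norm_def, mul_right_comm]

lemma algebraNorm_quadraticAlgebra {R : Type*} [CommRing R] {a b : R}
    (z : QuadraticAlgebra R a b) : Algebra.norm R z = z.norm :=
  QuadraticAlgebra.det_toLinearMap_eq_norm z

end QuotientCard

instance : Fact (Nat.Prime 5) := ⟨Nat.prime_five⟩

/-- Reduction `ℤ[i] → ℤ[i]/(2 + i) = 𝔽₅`; it sends `i` to `-2 = 3`. -/
def gaussianModTwoAddI : GaussianInt →+* ZMod 5 := Zsqrtd.lift ⟨3, by decide⟩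

lemma gaussianModTwoAddI_eq_zero_iff (z : GaussianInt) :
    gaussianModTwoAddI z = 0 ↔ (⟨2, 1⟩ : GaussianInt) ∣ z := by
  constructor
  · intro hz
    have hcast : ((z.re + z.im * 3 : ℤ) : ZMod 5) = 0 := by push_cast; exact hz
    obtain ⟨m, hm⟩ := (ZMod.intCast_zmod_eq_zero_iff_dvd _ 5).1 hcast
    push_cast at hm
    refine ⟨⟨2 * m - z.im, z.im - m⟩, Zsqrtd.ext ?_ ?_⟩ <;> simp <;> linarith
  · rintro ⟨w, rfl⟩
    have : gaussianModTwoAddI ⟨2, 1⟩ = 0 := by decide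
    rw [map_mul, this, zero_mul]

lemma one_le_normSq_toComplex {z : GaussianInt} (hz : z ≠ 0) : 1 ≤ normSq (toComplex z) := by
  rw [← intCast_real_norm]
  exact_mod_cast norm_pos.2 hz

lemma thC_mul_self : thC * thC = 1 + thC := by
  have hsqrt : (Real.sqrt 5 : ℂ) ^ 2 = 5 := by
    exact_mod_cast congrArg ofReal (Real.sq_sqrt (show (0 : ℝ) ≤ 5 by norm_num))
  unfold thC
  linear_combination hsqrt / 4

lemma thbC_eq : thbC = 1 - thC := by unfold thC thbC; ring

/-- The ring `ℤ[i][θ]`, `θ² = 1 + θ`, as an abstract quadratic algebra: `⟨a, b⟩` is `a + bθ`,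
`star` is `σ` and `QuadraticAlgebra.norm` is the relative norm `x ↦ x σ(x)` to `ℤ[i]`. -/
abbrev GoldenInt : Type := QuadraticAlgebra GaussianInt 1 1

namespace GoldenInt

/-- The form `x σ(x) - i y σ(y)`, the determinant of the Golden Code matrix
with rows `x, y` and `i σ(y), σ(x)`. -/
def codeDet (x y : GoldenInt) : GaussianInt := x.norm - ⟨0, 1⟩ * y.norm

lemma codeDet_mul_left (β x y : GoldenInt) : codeDet (β * x) (β * y) = β.norm * codeDet x y := by
  simp only [codeDet, map_mul]; ring

lemma four_mul_codeDet (x y : GoldenInt) :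
    4 * codeDet x y = (2 * x.re + x.im) ^ 2 - ⟨0, 1⟩ * (2 * y.re + y.im) ^ 2 -
      ⟨2, 1⟩ * ⟨2, -1⟩ * (x.im ^ 2 - ⟨0, 1⟩ * y.im ^ 2) := by
  have hfive : (⟨2, 1⟩ : GaussianInt) * ⟨2, -1⟩ = 5 := by decide
  rw [codeDet, QuadraticAlgebra.norm_def, QuadraticAlgebra.norm_def, hfive]
  ring

lemma codeDet_eq_zero_iff {x y : GoldenInt} : codeDet x y = 0 ↔ x = 0 ∧ y = 0 := by
  refine ⟨fun h => ?_, fun ⟨hx, hy⟩ => by simp [codeDet, hx, hy]⟩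
  have hdiag := four_mul_codeDet x y
  rw [h, mul_zero, eq_comm, sub_eq_zero] at hdiag
  have i_not_isSquare : ¬IsSquare (gaussianModTwoAddI ⟨0, 1⟩) := by decide
  obtain ⟨hx, hy, hx_im, hy_im⟩ := eq_zero_of_sq_sub_mul_sq_eq gaussianModTwoAddI_eq_zero_iff
    (by decide) i_not_isSquare (by decide) hdiag
  simpa [hx_im, hy_im, QuadraticAlgebra.ext_iff] using And.intro hx hy

lemma norm_eq_zero_iff {x : GoldenInt} : x.norm = 0 ↔ x = 0 := by
  simpa [codeDet] using codeDet_eq_zero_iff (x := x) (y := 0)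

lemma card_quotient_span_singleton {x : GoldenInt} (hx : x ≠ 0) :
    Nat.card (GoldenInt ⧸ Ideal.span {x}) = x.norm.norm.natAbs := by
  have := Module.Free.of_basis (zsqrtdBasis (-1))
  have := Module.Finite.of_basis (zsqrtdBasis (-1))
  have : Module.Free ℤ GoldenInt := Module.Free.trans (S := GaussianInt)
  have : Module.Finite ℤ GoldenInt := Module.Finite.trans GaussianInt _
  have hx' : x ∈ nonZeroDivisors GoldenInt := QuadraticAlgebra.norm_mem_nonZeroDivisors_iff.1
    (mem_nonZeroDivisors_of_ne_zero (norm_eq_zero_iff.not.2 hx))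
  rw [card_quotient_span_singleton_eq_natAbs_norm hx', ← Algebra.norm_norm (S := GaussianInt),
    algebraNorm_quadraticAlgebra, algebraNorm_zsqrtd]

/-- `ℂ` as a `ℤ[i]`-algebra, so that `embedding` can be defined by `QuadraticAlgebra.lift`. -/
instance : Algebra GaussianInt ℂ := toComplex.toAlgebra

/-- The embedding `a + bθ ↦ a + b (1 + √5) / 2` of `ℤ[i][θ]` into `ℂ`. -/
def embedding : GoldenInt →ₐ[GaussianInt] ℂ :=
  QuadraticAlgebra.lift ⟨thC, by simpa only [one_smul] using thC_mul_self⟩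

lemma embedding_mk (a b : GaussianInt) :
    embedding ⟨a, b⟩ = toComplex a + toComplex b * thC := by
  simp [embedding, Algebra.smul_def, RingHom.algebraMap_toAlgebra]

lemma embedding_star_mk (a b : GaussianInt) :
    embedding (star ⟨a, b⟩) = toComplex a + toComplex b * thbC := by
  rw [QuadraticAlgebra.star_mk, embedding_mk, thbC_eq, one_mul, map_add, map_neg]
  ring

lemma embedding_mul_embedding_star (x : GoldenInt) :
    embedding x * embedding (star x) = toComplex x.norm := by
  rw [← map_mul, ← QuadraticAlgebra.algebraMap_norm_eq_mul_star, AlgHom.commutes,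
    RingHom.algebraMap_toAlgebra]

lemma toComplex_codeDet_mul_left (β x y : GoldenInt) : toComplex (codeDet (β * x) (β * y)) =
    embedding β * embedding x * (embedding (star β) * embedding (star x)) -
      I * (embedding β * embedding y * (embedding (star β) * embedding (star y))) := by
  simp only [codeDet, map_sub, map_mul, ← embedding_mul_embedding_star, toComplex_def',
    Int.cast_zero, Int.cast_one, zero_add, one_mul]
  ring

lemma embedding_injective : Function.Injective embedding := by
  refine (injective_iff_map_eq_zero embedding).2 fun x hx => ?_
  have := embedding_mul_embedding_star x
  rw [hx, zero_mul, eq_comm, toComplex_eq_zero] at this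
  exact norm_eq_zero_iff.1 this

lemma range_embedding : embedding.toRingHom.range = OL := by
  apply le_antisymm
  · rintro _ ⟨x, rfl⟩
    have hI : I ∈ OL := Subring.subset_closure (by simp)
    have hth : thC ∈ OL := Subring.subset_closure (by simp)
    have htoComplex (a : GaussianInt) : toComplex a ∈ OL := by
      rw [toComplex_def]
      exact add_mem (intCast_mem _ _) (mul_mem (intCast_mem _ _) hI)
    change embedding ⟨x.re, x.im⟩ ∈ OL
    rw [embedding_mk]
    exact add_mem (htoComplex _) (mul_mem (htoComplex _) hth)
  · refine Subring.closure_le.2 ?_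
    rintro _ (rfl | rfl)
    · exact ⟨⟨⟨0, 1⟩, 0⟩, by simp [embedding_mk, toComplex_def']⟩
    · exact ⟨⟨0, 1⟩, by simp [embedding_mk]⟩

/-- The embedding as an isomorphism of the abstract ring `ℤ[i][θ]` onto `OL ⊆ ℂ`. -/
def equivOL : GoldenInt ≃+* OL :=
  (RingEquiv.ofBijective embedding.toRingHom.rangeRestrict
    ⟨fun _ _ h => embedding_injective (congrArg Subtype.val h),
      embedding.toRingHom.rangeRestrict_surjective⟩).trans
    (RingEquiv.subringCongr range_embedding)

lemma card_quotient_span_embedding {x : GoldenInt} (hx : x ≠ 0) (hmem : embedding x ∈ OL) :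
    Nat.card (OL ⧸ Ideal.span {(⟨embedding x, hmem⟩ : OL)}) = x.norm.norm.natAbs := by
  have hspan : Ideal.span {⟨embedding x, hmem⟩} =
      (Ideal.span {x}).map (equivOL : GoldenInt →+* OL) := by
    rw [Ideal.map_span, Set.image_singleton]
    rfl
  rw [← card_quotient_span_singleton hx]
  exact Nat.card_congr (Ideal.quotientEquiv _ _ equivOL hspan).symm.toEquiv

lemma normSq_norm_le_normSq_codeDet_mul_left (β : GoldenInt) {x y : GoldenInt}
    (hxy : ¬(x = 0 ∧ y = 0)) :
    normSq (toComplex β.norm) ≤ normSq (toComplex (codeDet (β * x) (β * y))) := by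
  rw [codeDet_mul_left, map_mul, normSq_mul]
  exact le_mul_of_one_le_right (normSq_nonneg _)
    (one_le_normSq_toComplex (codeDet_eq_zero_iff.not.2 hxy))

end GoldenInt

/-- For a nonzero `β = p + qθ ∈ O_L = ℤ[i][θ]` (with `p, q` Gaussian integers, and
`σ(β) = p + qθ̄`), the minimum of `|x₀σ(x₀) − i·x₁σ(x₁)|²` over all pairs
`(x₀, x₁) ∈ (β·O_L)² \ {(0,0)}` equals `|β·σ(β)|²`, which equals the absolute norm
`N(β·O_L) = |O_L/β·O_L|` of the ideal `β·O_L`. -/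
theorem stmt6 (p q : GaussianInt) (hpq : ¬(p = 0 ∧ q = 0))
    (hmem : toComplex p + toComplex q * thC ∈ OL) :
    IsLeast { r : ℝ | ∃ a b c d : GaussianInt, ¬(a = 0 ∧ b = 0 ∧ c = 0 ∧ d = 0) ∧
      r = Complex.normSq
        (((toComplex p + toComplex q * thC) * (toComplex a + toComplex b * thC))
            * ((toComplex p + toComplex q * thbC) * (toComplex a + toComplex b * thbC))
          - Complex.I *
            (((toComplex p + toComplex q * thC) * (toComplex c + toComplex d * thC))
              * ((toComplex p + toComplex q * thbC) * (toComplex c + toComplex d * thbC)))) }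
      (Complex.normSq
        ((toComplex p + toComplex q * thC) * (toComplex p + toComplex q * thbC))) ∧
    Complex.normSq ((toComplex p + toComplex q * thC) * (toComplex p + toComplex q * thbC))
      = (Nat.card
          (↥OL ⧸ Ideal.span {(⟨toComplex p + toComplex q * thC, hmem⟩ : OL)}) : ℝ) := by
  let β : GoldenInt := ⟨p, q⟩
  have hβ : β ≠ 0 := fun h => hpq (QuadraticAlgebra.ext_iff.1 h)
  simp only [← GoldenInt.embedding_mk, ← GoldenInt.embedding_star_mk,
    ← GoldenInt.toComplex_codeDet_mul_left, GoldenInt.embedding_mul_embedding_star]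
  refine ⟨⟨⟨1, 0, 0, 0, by simp, ?_⟩, ?_⟩, ?_⟩
  · simp [GoldenInt.codeDet, QuadraticAlgebra.norm_def]
  · rintro _ ⟨a, b, c, d, hne, rfl⟩
    refine GoldenInt.normSq_norm_le_normSq_codeDet_mul_left β ?_
    simpa [QuadraticAlgebra.ext_iff, and_assoc] using hne
  · rw [GoldenInt.card_quotient_span_embedding hβ, natCast_natAbs_norm, intCast_real_norm]
end
end
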